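/- Let f : ℕ → ℝ be the function computed by a black box trained for language modelling over a one-letter alphabet, i.e. f(m) ≥ 0 for all m and Σ_{m≥0} f(m) = 1. For n ∈ ℕ let H^n = H_{f^n} be the truncated Hankel operator, where f^n(m) = f(m) for m ≤ n and f^n(m) = 0 for m > n. Then for every k ∈ ℕ, |σ_k(H_f) − σ_k(H^n)| ≤ 1 − Σ_{i=0}^{n} f(i). -/

import Mathlib

/-!
Approximation numbers are 1-Lipschitz in the operator norm (`approxNum_le_add`), and `H - Hn`
is the Hankel operator of the tail `f - trunc f n`, a nonnegative sequence of total mass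
`1 - ∑ i ≤ n, f i`. So it suffices that the Hankel operator of a nonnegative sequence `g` of
total mass `s` has norm at most `s` (`IsHankelOp.norm_le`). This is the Schur test: every row and
every column of the matrix `g (i + j)` has sum at most `s`, so Cauchy–Schwarz with weights
`g (i + j)` gives `|(T x) i|² ≤ s * ∑ j, g (i + j) * (x j)²`, and summing over `i` first
gives `‖T x‖² ≤ s² * ‖x‖²`.
-/

/-- `L2` is the Hilbert space `ℓ²(ℕ)` of square-summable real sequences. -/
noncomputable abbrev L2 : Type := lp (fun _ : ℕ => ℝ) 2

/-- `IsHankelOp f T` says that the bounded linear operator `T` on `ℓ²(ℕ)` is the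
Hankel operator associated with `f : ℕ → ℝ`, i.e. for every `x ∈ ℓ²(ℕ)` and every
`i ∈ ℕ` the series `Σ_{j≥0} f(i+j)·x(j)` converges and equals `(T x)(i)`. -/
def IsHankelOp (f : ℕ → ℝ) (T : L2 →L[ℝ] L2) : Prop :=
  ∀ x : L2, ∀ i : ℕ, HasSum (fun j : ℕ => f (i + j) * x j) (T x i)

/-- The truncation `f^n` of `f` : `f^n(m) = f(m)` for `m ≤ n` and `0` otherwise. -/
def trunc (f : ℕ → ℝ) (n : ℕ) : ℕ → ℝ := fun m => if m ≤ n then f m else 0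

/-- The `k`-th approximation number of a bounded linear operator `T` on `ℓ²(ℕ)`:
`σ_k(T) = inf { ‖T − F‖ : F bounded linear with range of dimension at most k }`. -/
noncomputable def approxNum (T : L2 →L[ℝ] L2) (k : ℕ) : ℝ :=
  sInf { r : ℝ | ∃ F : L2 →L[ℝ] L2,
    Module.rank ℝ (LinearMap.range (F : L2 →ₗ[ℝ] L2)) ≤ k ∧ r = ‖T - F‖ }

lemma sum_shift_le {g : ℕ → ℝ} {s : ℝ} (hg : ∀ m, 0 ≤ g m) (hs : HasSum g s)
    (t : Finset ℕ) (a : ℕ) : ∑ j ∈ t, g (a + j) ≤ s := by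
  have := sum_le_hasSum (t.map (addLeftEmbedding a)) (fun m _ => hg m) hs
  simpa using this

lemma hasSum_sq (x : L2) : HasSum (fun j => (x j) ^ 2) (‖x‖ ^ 2) := by
  have := lp.hasSum_norm (p := 2) (by norm_num) x
  simpa using this

/-- The Schur test for the matrix `g (i + j)` with `g` nonnegative. -/
lemma IsHankelOp.norm_le {g : ℕ → ℝ} {s : ℝ} {T : L2 →L[ℝ] L2} (hT : IsHankelOp g T)
    (hg : ∀ m, 0 ≤ g m) (hs : HasSum g s) : ‖T‖ ≤ s := by
  have hs0 : 0 ≤ s := hs.nonneg hg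
  refine T.opNorm_le_bound hs0 fun x => ?_
  have hx := hasSum_sq x
  have hsummable (i : ℕ) : Summable (fun j => g (i + j) * (x j) ^ 2) := by
    refine Summable.of_nonneg_of_le (fun j => mul_nonneg (hg _) (sq_nonneg _)) (fun j => ?_)
      (hx.summable.mul_left s)
    exact mul_le_mul_of_nonneg_right (le_hasSum hs _ fun m _ => hg m) (sq_nonneg _)
  -- Cauchy–Schwarz in the `i`-th row, passing to the limit over finite sets of columns.
  have hrow (i : ℕ) : (T x i) ^ 2 ≤ s * ∑' j, g (i + j) * (x j) ^ 2 := by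
    refine le_of_tendsto' ((hT x i).pow 2) fun t => ?_
    calc (∑ j ∈ t, g (i + j) * x j) ^ 2
        ≤ (∑ j ∈ t, g (i + j)) * ∑ j ∈ t, g (i + j) * (x j) ^ 2 :=
          Finset.sum_sq_le_sum_mul_sum_of_sq_le_mul t (fun j _ => hg _)
            (fun j _ => mul_nonneg (hg _) (sq_nonneg _)) (fun j _ => le_of_eq (by ring))
      _ ≤ s * ∑' j, g (i + j) * (x j) ^ 2 := by
          refine mul_le_mul (sum_shift_le hg hs t i) ?_
            (Finset.sum_nonneg fun j _ => mul_nonneg (hg _) (sq_nonneg _)) hs0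
          exact (hsummable i).sum_le_tsum t fun j _ => mul_nonneg (hg _) (sq_nonneg _)
  have hcol (t : Finset ℕ) : ∑ i ∈ t, ∑' j, g (i + j) * (x j) ^ 2 ≤ s * ‖x‖ ^ 2 := by
    refine hasSum_le (fun j => ?_) (hasSum_sum fun i (_ : i ∈ t) => (hsummable i).hasSum)
      (hx.mul_left s)
    rw [← Finset.sum_mul]
    refine mul_le_mul_of_nonneg_right ?_ (sq_nonneg _)
    simpa only [add_comm] using sum_shift_le hg hs t j
  have hsq : ‖T x‖ ^ 2 ≤ (s * ‖x‖) ^ 2 := by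
    refine le_of_tendsto' (hasSum_sq (T x)) fun t => ?_
    calc ∑ i ∈ t, (T x i) ^ 2 ≤ ∑ i ∈ t, s * ∑' j, g (i + j) * (x j) ^ 2 :=
          Finset.sum_le_sum fun i _ => hrow i
      _ ≤ s * (s * ‖x‖ ^ 2) := by
          rw [← Finset.mul_sum]
          exact mul_le_mul_of_nonneg_left (hcol t) hs0
      _ = (s * ‖x‖) ^ 2 := by ring
  exact le_of_sq_le_sq hsq (by positivity)

lemma approxNum_le_add (S T : L2 →L[ℝ] L2) (k : ℕ) :
    approxNum S k ≤ approxNum T k + ‖S - T‖ := by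
  rw [← sub_le_iff_le_add]
  -- Nonemptiness is witnessed by `F = 0`.
  refine le_csInf ⟨‖T - 0‖, 0, by simp, rfl⟩ ?_
  rintro _ ⟨F, hF, rfl⟩
  rw [sub_le_iff_le_add]
  calc approxNum S k ≤ ‖S - F‖ :=
        csInf_le ⟨0, by rintro _ ⟨G, _, rfl⟩; exact norm_nonneg _⟩ ⟨F, hF, rfl⟩
    _ = ‖(T - F) + (S - T)‖ := by congr 1; abel
    _ ≤ ‖T - F‖ + ‖S - T‖ := norm_add_le _ _

lemma hasSum_trunc (f : ℕ → ℝ) (n : ℕ) :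
    HasSum (trunc f n) (∑ i ∈ Finset.range (n + 1), f i) := by
  have h : ∑ i ∈ Finset.range (n + 1), f i = ∑ i ∈ Finset.range (n + 1), trunc f n i :=
    Finset.sum_congr rfl fun i hi => by
      simp [trunc, Nat.lt_succ_iff.mp (Finset.mem_range.mp hi)]
  rw [h]
  refine hasSum_sum_of_ne_finset_zero fun i hi => ?_
  have : ¬ i ≤ n := fun hle => hi (Finset.mem_range.mpr (Nat.lt_succ_of_le hle))
  simp [trunc, this]

/-- for a probability distribution `f` on `ℕ`, the approximation
numbers of the Hankel operator and of its truncation satisfy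
`|σ_k(H_f) − σ_k(H^n)| ≤ 1 − Σ_{i=0}^n f(i)`. -/
theorem approxNum_truncation_bound (f : ℕ → ℝ)
    (hf_nonneg : ∀ m, 0 ≤ f m) (hf_sum : HasSum f 1)
    (n : ℕ) (H Hn : L2 →L[ℝ] L2)
    (hH : IsHankelOp f H) (hHn : IsHankelOp (trunc f n) Hn) (k : ℕ) :
    |approxNum H k - approxNum Hn k| ≤ 1 - ∑ i ∈ Finset.range (n + 1), f i := by
  have hD : IsHankelOp (fun m => f m - trunc f n m) (H - Hn) := fun x i => by
    simpa [sub_mul] using (hH x i).sub (hHn x i)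
  have hnorm : ‖H - Hn‖ ≤ 1 - ∑ i ∈ Finset.range (n + 1), f i := by
    refine hD.norm_le (fun m => ?_) (hf_sum.sub (hasSum_trunc f n))
    by_cases hm : m ≤ n <;> simp [trunc, hm, hf_nonneg m]
  have h₁ := approxNum_le_add H Hn k
  have h₂ := approxNum_le_add Hn H k
  rw [norm_sub_rev] at h₂
  rw [abs_le]
  constructor <;> linarith
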